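/- Let m ≥ r ≥ 2 and k ≥ 1 be integers and let F_1, …, F_k be nondegenerate r-graphs, each on at most m vertices. Suppose there exists c > 0 such that for every i ∈ [k] and all sufficiently large n: (a) F_i is (c·C(n,r−1), ((1−π(F_i))/(4m))·C(n,r−1))-bounded, and (b) ex(n,F_i) is ((1−π(F_i))/(8m))·C(n,r−1)-smooth. Let ε := min{ c/(4erm), (1−π(F_1))/(64rm²), …, (1−π(F_k))/(64rm²) }. Then there exists N_0 such that for all integers n ≥ N_0 and all t_1, …, t_k ∈ ℕ with t+1 := t_1 + ⋯ + t_k ≤ ε·n, one has ex(n, ⊔_{i=1}^k t_i F_i) ≤ C(n,r) − C(n−t,r) + max_{i∈[k]} ex(n−t, F_i); moreover, if max_{i∈[k]} ex(n−t, F_i) = ex(n−t, {F_1,…,F_k}), then equality holds. -/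

import Mathlib

open Filter

namespace DensityCH

/-- An `r`-uniform hypergraph with vertices in `ℕ`:
a finite vertex set together with a set of `r`-element edges. -/
structure HGraph (r : ℕ) where
  verts : Finset ℕ
  edges : Finset (Finset ℕ)
  edges_sub : ∀ e ∈ edges, e ⊆ verts
  edges_card : ∀ e ∈ edges, e.card = r

namespace HGraph

/-- Build an `r`-graph from a vertex set and a set of candidate edges,
keeping exactly the well-formed candidates. -/
def ofEdges (r : ℕ) (V : Finset ℕ) (E : Finset (Finset ℕ)) : HGraph r where
  verts := V
  edges := E.filter fun e => e ⊆ V ∧ e.card = r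
  edges_sub := fun e he => ((Finset.mem_filter.mp he).2).1
  edges_card := fun e he => ((Finset.mem_filter.mp he).2).2

variable {r : ℕ}

/-- `H` contains a copy of `F`, i.e. a subgraph isomorphic to `F`. -/
def IsCopyIn (F H : HGraph r) : Prop :=
  ∃ f : ℕ → ℕ, Set.InjOn f ↑F.verts ∧ (∀ v ∈ F.verts, f v ∈ H.verts) ∧
    ∀ e ∈ F.edges, e.image f ∈ H.edges

/-- The subgraph of `H` induced on `S`. -/
def induce (H : HGraph r) (S : Finset ℕ) : HGraph r :=
  ofEdges r (H.verts ∩ S) (H.edges.filter fun e => e ⊆ S)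

/-- Delete a vertex from `H`. -/
def deleteVert (H : HGraph r) (v : ℕ) : HGraph r :=
  ofEdges r (H.verts.erase v) (H.edges.filter fun e => v ∉ e)

/-- The degree of a vertex. -/
def deg (H : HGraph r) (v : ℕ) : ℕ := (H.edges.filter fun e => v ∈ e).card

/-- The maximum degree `Δ(H)`. -/
def maxDeg (H : HGraph r) : ℕ := H.verts.sup H.deg

/-- The minimum degree `δ(H)`. -/
def minDeg (H : HGraph r) : ℕ :=
  if h : H.verts.Nonempty then H.verts.inf' h H.deg else 0

/-- The average degree `d(H) = r·|E(H)|/|V(H)|`. -/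
noncomputable def avgDeg (H : HGraph r) : ℝ :=
  (r : ℝ) * (H.edges.card : ℝ) / (H.verts.card : ℝ)

/-- `H` contains `k` pairwise vertex-disjoint copies of `F`, i.e. `ν(F,H) ≥ k`. -/
def HasMatching (F H : HGraph r) (k : ℕ) : Prop :=
  ∃ S : Fin k → Finset ℕ,
    (∀ i, S i ⊆ H.verts ∧ (S i).card = F.verts.card) ∧
    (∀ i j, i ≠ j → Disjoint (S i) (S j)) ∧
    ∀ i, F.IsCopyIn (H.induce (S i))

/-- Isomorphism of hypergraphs. -/
def Iso (G H : HGraph r) : Prop :=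
  ∃ f : ℕ → ℕ, Set.BijOn f ↑G.verts ↑H.verts ∧
    ∀ e ∈ Finset.powersetCard r G.verts, (e ∈ G.edges ↔ e.image f ∈ H.edges)

/-- The join `G ⋈ H`: all edges of `G`, all edges of `H`, and all `r`-sets meeting
both vertex sets. -/
def join (G H : HGraph r) : HGraph r :=
  ofEdges r (G.verts ∪ H.verts)
    (G.edges ∪ H.edges ∪ ((Finset.powersetCard r (G.verts ∪ H.verts)).filter
      fun e => (e ∩ G.verts).Nonempty ∧ (e ∩ H.verts).Nonempty))

end HGraph

/-- The complete `r`-graph on a vertex set `S`. -/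
def completeOn (r : ℕ) (S : Finset ℕ) : HGraph r :=
  HGraph.ofEdges r S (Finset.powersetCard r S)

/-- The `r`-graph on `V` with no edges. -/
def emptyOn (r : ℕ) (V : Finset ℕ) : HGraph r := HGraph.ofEdges r V ∅

/-- The Turán number `ex(n,F)`. -/
noncomputable def exN (r n : ℕ) (F : HGraph r) : ℕ :=
  sSup {m | ∃ H : HGraph r, H.verts.card = n ∧ ¬ F.IsCopyIn H ∧ H.edges.card = m}

/-- `d(n,F) = r·ex(n,F)/n`. -/
noncomputable def dN (r n : ℕ) (F : HGraph r) : ℝ := (r : ℝ) * (exN r n F : ℝ) / (n : ℝ)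

/-- `δ(n,F) = ex(n,F) − ex(n−1,F)` (as a real number). -/
noncomputable def deltaN (r n : ℕ) (F : HGraph r) : ℝ := (exN r n F : ℝ) - (exN r (n-1) F : ℝ)

/-- `x` is the Turán density `π(F)`, i.e. the limit of `ex(n,F)/C(n,r)`. -/
def HasTuranDensity (r : ℕ) (F : HGraph r) (x : ℝ) : Prop :=
  Tendsto (fun n : ℕ => (exN r n F : ℝ) / (n.choose r : ℝ)) atTop (nhds x)

/-- `ex(n,(t+1)F)`: the maximum number of edges of an `n`-vertex `r`-graph with no
`t+1` pairwise vertex-disjoint copies of `F`. -/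
noncomputable def exMatchN (r n t : ℕ) (F : HGraph r) : ℕ :=
  sSup {m | ∃ H : HGraph r, H.verts.card = n ∧ ¬ F.HasMatching H (t+1) ∧ H.edges.card = m}

/-- `H ∈ EX(n,F)`. -/
def IsExtremalFree (r n : ℕ) (F H : HGraph r) : Prop :=
  H.verts.card = n ∧ ¬ F.IsCopyIn H ∧ H.edges.card = exN r n F

/-- `H ∈ EX(n,(t+1)F)`. -/
def IsExtremalMatchingFree (r n t : ℕ) (F H : HGraph r) : Prop :=
  H.verts.card = n ∧ ¬ F.HasMatching H (t+1) ∧ H.edges.card = exMatchN r n t F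

/-- `F` is `(f1, f2)`-bounded at `n`. -/
def BoundedAt (r n : ℕ) (F : HGraph r) (f1 f2 : ℝ) : Prop :=
  ∀ H : HGraph r, H.verts.card = n → ¬ F.IsCopyIn H →
    dN r n F - f1 ≤ H.avgDeg → (H.maxDeg : ℝ) ≤ dN r n F + f2

/-- `ex(·,F)` is `g`-smooth at `n`: `|δ(n,F) − d(n−1,F)| ≤ g(n)`. -/
def SmoothAt (r n : ℕ) (F : HGraph r) (g : ℝ) : Prop :=
  |deltaN r n F - dN r (n-1) F| ≤ g

/-- The collection `H 0, …, H t` (on a common vertex set) has a rainbow `F`-matching. -/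
def HasRainbowMatching (r t : ℕ) (F : HGraph r) (H : Fin (t+1) → HGraph r) : Prop :=
  ∃ S : Fin (t+1) → Finset ℕ,
    (∀ i, S i ⊆ (H i).verts ∧ (S i).card = F.verts.card) ∧
    (∀ i j, i ≠ j → Disjoint (S i) (S j)) ∧
    ∀ i, F.IsCopyIn ((H i).induce (S i))

/-!  Patterns -/

/-- An `r`-uniform pattern: a finite index set together with a collection of
`r`-multisets on it. -/
structure Pattern (r : ℕ) where
  idx : Finset ℕ
  mE : Finset (Multiset ℕ)
  card_eq : ∀ s ∈ mE, Multiset.card s = r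
  mem_idx : ∀ s ∈ mE, ∀ i ∈ s, i ∈ idx

namespace Pattern

variable {r : ℕ}

/-- The pattern `P − i`. -/
def erase (P : Pattern r) (i : ℕ) : Pattern r where
  idx := P.idx.erase i
  mE := P.mE.filter fun s => i ∉ s
  card_eq := fun s hs => P.card_eq s (Finset.mem_filter.mp hs).1
  mem_idx := by
    intro s hs j hj
    have h1 := Finset.mem_filter.mp hs
    refine Finset.mem_erase.mpr ⟨?_, P.mem_idx s h1.1 j hj⟩
    rintro rfl
    exact h1.2 hj

/-- `H` is a `P`-construction: a blowup of the pattern `P`. -/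
def IsConstruction (P : Pattern r) (H : HGraph r) : Prop :=
  ∃ part : ℕ → ℕ, (∀ v ∈ H.verts, part v ∈ P.idx) ∧
    ∀ e : Finset ℕ, e ∈ H.edges ↔ (e ⊆ H.verts ∧ e.card = r ∧ Multiset.map part e.val ∈ P.mE)

/-- `H` is a `P`-subconstruction: a subgraph of a `P`-construction. -/
def IsSubconstruction (P : Pattern r) (H : HGraph r) : Prop :=
  ∃ G : HGraph r, P.IsConstruction G ∧ H.verts ⊆ G.verts ∧ H.edges ⊆ G.edges

end Pattern

/-- `Λ(P,n)`: the maximum number of edges of an `n`-vertex `P`-construction. -/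
noncomputable def patEx (r : ℕ) (P : Pattern r) (n : ℕ) : ℕ :=
  sSup {m | ∃ H : HGraph r, P.IsConstruction H ∧ H.verts.card = n ∧ H.edges.card = m}

/-- The Lagrangian `λ(P) = lim Λ(P,n)/C(n,r)`. -/
noncomputable def patLagrangian (r : ℕ) (P : Pattern r) : ℝ :=
  limUnder atTop fun n : ℕ => (patEx r P n : ℝ) / (n.choose r : ℝ)

/-- The pattern `P` is minimal: `λ(P−i) < λ(P)` for all `i`. -/
def Pattern.Minimal {r : ℕ} (P : Pattern r) : Prop :=
  ∀ i ∈ P.idx, patLagrangian r (P.erase i) < patLagrangian r P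

/-- `(F,P)` is a Turán pair. -/
def IsTuranPair (r : ℕ) (F : HGraph r) (P : Pattern r) : Prop :=
  (∀ H : HGraph r, P.IsConstruction H → ¬ F.IsCopyIn H) ∧
  (∀ H : HGraph r, ¬ F.IsCopyIn H → H.edges.card = exN r H.verts.card F →
    P.IsConstruction H)

/-- `F` is edge-stable with respect to `P` (with Turán density `π`). -/
def EdgeStable (r : ℕ) (F : HGraph r) (P : Pattern r) (π : ℝ) : Prop :=
  ∀ δ : ℝ, 0 < δ → ∃ N₀ : ℕ, ∃ ζ : ℝ, 0 < ζ ∧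
    ∀ H : HGraph r, N₀ ≤ H.verts.card → ¬ F.IsCopyIn H →
      (π - ζ) * (H.verts.card.choose r : ℝ) ≤ (H.edges.card : ℝ) →
      ∃ H' : HGraph r, H'.verts ⊆ H.verts ∧ H'.edges ⊆ H.edges ∧
        (π - δ) * (H.verts.card.choose r : ℝ) ≤ (H'.edges.card : ℝ) ∧
        P.IsSubconstruction H'

/-- `F` is weakly vertex-extendable with respect to `P` (with Turán density `π`). -/
def WeaklyVertexExtendable (r : ℕ) (F : HGraph r) (P : Pattern r) (π : ℝ) : Prop :=
  ∀ δ : ℝ, 0 < δ → ∃ N₀ : ℕ, ∃ ζ : ℝ, 0 < ζ ∧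
    ∀ H : HGraph r, N₀ ≤ H.verts.card → ¬ F.IsCopyIn H →
      (π - ζ) * (((H.verts.card - 1).choose (r-1) : ℕ) : ℝ) ≤ (H.minDeg : ℝ) →
      ∀ v ∈ H.verts, P.IsSubconstruction (H.deleteVert v) →
        (H.deg v : ℝ) ≤ (π + δ) * (((H.verts.card - 1).choose (r-1) : ℕ) : ℝ)

/-- `F` is degree-stable with respect to `P` (with Turán density `π`). -/
def DegreeStable (r : ℕ) (F : HGraph r) (P : Pattern r) (π : ℝ) : Prop :=
  ∃ ζ : ℝ, 0 < ζ ∧ ∃ N₀ : ℕ,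
    ∀ H : HGraph r, N₀ ≤ H.verts.card → ¬ F.IsCopyIn H →
      (π - ζ) * (((H.verts.card - 1).choose (r-1) : ℕ) : ℝ) ≤ (H.minDeg : ℝ) →
      P.IsSubconstruction H

/-!  Concrete constructions -/

/-- The generalized Turán graph `T_r(·,ℓ)` on vertex set `V` (parts are residue
classes mod `ℓ`; on an interval these are balanced). -/
def turanOn (r ℓ : ℕ) (V : Finset ℕ) : HGraph r :=
  HGraph.ofEdges r V ((Finset.powersetCard r V).filter
    fun e => ∀ u ∈ e, ∀ v ∈ e, u % ℓ = v % ℓ → u = v)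

/-- The `r`-graph on `V₁ ∪ V₂` whose edges are all `r`-sets meeting both parts. -/
def crossOn (r : ℕ) (V₁ V₂ : Finset ℕ) : HGraph r :=
  HGraph.ofEdges r (V₁ ∪ V₂) ((Finset.powersetCard r (V₁ ∪ V₂)).filter
    fun e => (e ∩ V₁).Nonempty ∧ (e ∩ V₂).Nonempty)

/-- The `r`-graph on `V₁ ∪ V₂` whose edges are all `r`-sets meeting `V₁` in an odd
number of vertices. -/
def oddCross (r : ℕ) (V₁ V₂ : Finset ℕ) : HGraph r :=
  HGraph.ofEdges r (V₁ ∪ V₂) ((Finset.powersetCard r (V₁ ∪ V₂)).filter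
    fun e => Odd (e ∩ V₁).card)

/-- The Fano plane. -/
def fano : HGraph 3 :=
  HGraph.ofEdges 3 (Finset.Icc 1 7)
    {({1,2,3} : Finset ℕ), {3,4,5}, {5,6,1}, {1,7,4}, {2,7,5}, {3,7,6}, {2,4,6}}

/-- The generalized triangle `𝕋_r`, with edges `{1,…,r}`, `{1,…,r−1,r+1}` and
`{r,…,2r−1}`. -/
def genTri (r : ℕ) : HGraph r :=
  HGraph.ofEdges r (Finset.Icc 1 (2*r - 1))
    {Finset.Icc 1 r, Finset.Icc 1 (r-1) ∪ {r+1}, Finset.Icc r (2*r - 1)}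

/-- `G` is a blowup of the `r`-graph `W` (viewing `W` as a pattern). -/
def IsBlowupOf {r : ℕ} (W G : HGraph r) : Prop :=
  ∃ part : ℕ → ℕ, (∀ v ∈ G.verts, part v ∈ W.verts) ∧
    ∀ e : Finset ℕ, e ∈ G.edges ↔
      (e ⊆ G.verts ∧ e.card = r ∧ ∃ f ∈ W.edges, Multiset.map part e.val = f.val)

/-- The expansion `H^F` of an `r`-graph `F`: for every pair of vertices not covered
by an edge of `F`, add an edge consisting of this pair plus `r−2` new vertices,
these sets of new vertices being pairwise disjoint. -/
def HGraph.expansion {r : ℕ} (F : HGraph r) : HGraph r :=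
  HGraph.ofEdges r
    (F.verts ∪ (((F.verts ×ˢ F.verts).filter fun p =>
        p.1 < p.2 ∧ ∀ e ∈ F.edges, ¬ (p.1 ∈ e ∧ p.2 ∈ e)).biUnion fun p =>
      (Finset.range (r-2)).image fun s =>
        (F.verts.sup id + 1) + (p.1 * (F.verts.sup id + 1) + p.2) * r + s))
    (F.edges ∪ (((F.verts ×ˢ F.verts).filter fun p =>
        p.1 < p.2 ∧ ∀ e ∈ F.edges, ¬ (p.1 ∈ e ∧ p.2 ∈ e)).image fun p =>
      insert p.1 (insert p.2 ((Finset.range (r-2)).image fun s =>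
        (F.verts.sup id + 1) + (p.1 * (F.verts.sup id + 1) + p.2) * r + s))))

/-- A `2`-graph is a tree on `k` vertices: `k` vertices, `k−1` edges, connected. -/
def IsTreeGraph (k : ℕ) (T : HGraph 2) : Prop :=
  T.verts.card = k ∧ T.edges.card = k - 1 ∧
  ∀ S : Finset ℕ, S ⊆ T.verts → S.Nonempty → S ≠ T.verts →
    ∃ e ∈ T.edges, (e ∩ S).Nonempty ∧ (e \ S).Nonempty

/-- `T` satisfies the Erdős–Sós property for `k`: every graph with average degree
greater than `k−2` contains `T`. -/
def ErdosSos (k : ℕ) (T : HGraph 2) : Prop :=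
  ∀ G : HGraph 2, ((k : ℝ) - 2) * (G.verts.card : ℝ) < 2 * (G.edges.card : ℝ) →
    T.IsCopyIn G

/-- The `(r−2)`-expansion `Exp(T)` of a `2`-graph `T`: enlarge every edge by one
common fixed set of `r−2` new vertices. -/
def expTree (r : ℕ) (T : HGraph 2) : HGraph r :=
  HGraph.ofEdges r
    (T.verts ∪ ((Finset.range (r-2)).image fun s => T.verts.sup id + 1 + s))
    (T.edges.image fun e =>
      e ∪ ((Finset.range (r-2)).image fun s => T.verts.sup id + 1 + s))

/-- The chromatic number of a `2`-graph. -/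
noncomputable def chrom (F : HGraph 2) : ℕ :=
  sInf {k | ∃ c : ℕ → ℕ, (∀ v ∈ F.verts, c v < k) ∧
    ∀ e ∈ F.edges, ∀ u ∈ e, ∀ v ∈ e, u ≠ v → c u ≠ c v}

/-- A graph is edge-critical if deleting some edge lowers its chromatic number. -/
def EdgeCritical (F : HGraph 2) : Prop :=
  ∃ e ∈ F.edges, chrom (HGraph.ofEdges 2 F.verts (F.edges.erase e)) < chrom F

/-- `H` is semibipartite: the vertex set splits into `V₁ ∪ V₂` so that every edge
has exactly one vertex in `V₁`. -/
def Semibipartite (r : ℕ) (H : HGraph r) : Prop :=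
  ∃ V₁ ⊆ H.verts, ∀ e ∈ H.edges, (e ∩ V₁).card = 1

/-- `H` is a `K_ℓ^r`-subconstruction, i.e. an `ℓ`-partite `r`-graph. -/
def IsKlSub (r ℓ : ℕ) (H : HGraph r) : Prop :=
  ∃ f : ℕ → ℕ, (∀ v ∈ H.verts, f v < ℓ) ∧
    ∀ e ∈ H.edges, ∀ u ∈ e, ∀ v ∈ e, f u = f v → u = v

/-- The Lagrangian `λ(W)` of an `r`-graph `W`, viewing `W` as a pattern. -/
noncomputable def hgLagrangian (r : ℕ) (W : HGraph r) : ℝ :=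
  limUnder atTop fun n : ℕ =>
    ((sSup {m | ∃ G : HGraph r, IsBlowupOf W G ∧ G.verts.card = n ∧ G.edges.card = m} : ℕ) : ℝ)
      / (n.choose r : ℝ)

/-- The `r`-graph `B(r,ℓ+1)`. -/
def BGraph (r ℓ : ℕ) : HGraph r :=
  HGraph.ofEdges r (Finset.Icc 1 (ℓ+1))
    (insert (Finset.Icc 1 r)
      ((Finset.powersetCard r (Finset.Icc 2 (ℓ+1))).filter
        fun e => (e ∩ Finset.Icc 2 r).card ≤ 1))

/-- The `r`-uniform matching of size two, `M_2^r`. -/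
def matching2 (r : ℕ) : HGraph r :=
  HGraph.ofEdges r (Finset.Icc 1 (2*r)) {Finset.Icc 1 r, Finset.Icc (r+1) (2*r)}

/-- The expanded triangle `𝓒_3^{2r}`. -/
def expandedTriangle (r : ℕ) : HGraph (2*r) :=
  HGraph.ofEdges (2*r) (Finset.Icc 1 (3*r))
    {Finset.Icc 1 (2*r), Finset.Icc (r+1) (3*r), Finset.Icc 1 r ∪ Finset.Icc (2*r+1) (3*r)}

/-- The `4`-graph `𝔽_{4,3}`. -/
def F43 : HGraph 4 :=
  HGraph.ofEdges 4 (Finset.Icc 1 7)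
    {({1,2,3,4} : Finset ℕ), {1,2,3,5}, {1,2,3,6}, {1,2,3,7}, {4,5,6,7}}

/-- The `3`-graph `𝔽_{3,2}`. -/
def F32 : HGraph 3 :=
  HGraph.ofEdges 3 (Finset.Icc 1 5)
    {({1,2,3} : Finset ℕ), {1,2,4}, {1,2,5}, {3,4,5}}

/-- `H` contains pairwise vertex-disjoint copies of `F i`, `ts i` many of each. -/
def HasMixedMatching (r k : ℕ) (F : Fin k → HGraph r) (ts : Fin k → ℕ)
    (H : HGraph r) : Prop :=
  ∃ S : (i : Fin k) → Fin (ts i) → Finset ℕ,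
    (∀ i j, S i j ⊆ H.verts ∧ (S i j).card = (F i).verts.card) ∧
    (∀ p q : Σ i : Fin k, Fin (ts i), p ≠ q → Disjoint (S p.1 p.2) (S q.1 q.2)) ∧
    ∀ i j, (F i).IsCopyIn (H.induce (S i j))

/-- `ex(n, ⊔ᵢ tᵢ Fᵢ)`. -/
noncomputable def exMixedN (r k : ℕ) (F : Fin k → HGraph r) (ts : Fin k → ℕ)
    (n : ℕ) : ℕ :=
  sSup {m | ∃ H : HGraph r, H.verts.card = n ∧ ¬ HasMixedMatching r k F ts H ∧
    H.edges.card = m}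

/-- `ex(n, {F₁,…,F_k})`. -/
noncomputable def exFamN (r k : ℕ) (F : Fin k → HGraph r) (n : ℕ) : ℕ :=
  sSup {m | ∃ H : HGraph r, H.verts.card = n ∧ (∀ i, ¬ (F i).IsCopyIn H) ∧
    H.edges.card = m}

/-!
Let `H` have `n` vertices and more edges than claimed. Choose a set `L` of at most `t` vertices of
degree at least `T = (π + 8 * w) * C(n, r - 1)`, where `π` is the largest of the densities `π i` and
`16 * m * w = 1 - π`, taking all such vertices if there are at most `t` of them, and a maximal
packing of the required copies outside `L`. By boundedness, deleting few vertices from `H` while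
keeping a vertex of `L` leaves a copy of every `F i`; so if the packing misses at most `|L|` copies,
each missing one can be obtained from its own vertex of `L`, and the mixed matching is complete.

Otherwise `|L| = l ≤ t`, and the packing covers a set `B` of `b ≤ m * (t - l)` vertices, each of
degree at most `T` when `l < t`. Every edge of `H` meets `L`, meets `B`, or avoids both, and by
maximality some `F q` has no copy outside `L ∪ B`. Hence `H` has at most
`C(n, r) - C(n - l, r) + b * T + ex(n - l - b, F q)` edges. By smoothness, `ex(·, F j)` gains about
`π * C(n, r - 1)` per vertex, so moving the remaining `t - l` vertices into `L` gains about
`(t - l) * (1 - π) * C(n, r - 1) = 16 * m * w * (t - l) * C(n, r - 1)`, which exceeds the extra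
`8 * w * b * C(n, r - 1)` that the degrees in `B` can contribute. The bound is therefore largest for
`l = t`, where it is the claimed one.
-/

namespace HGraph

open Finset

variable {r : ℕ} {F G H : HGraph r}

theorem mem_edges_ofEdges {V e : Finset ℕ} {E : Finset (Finset ℕ)} :
    e ∈ (ofEdges r V E).edges ↔ e ∈ E ∧ e ⊆ V ∧ e.card = r :=
  mem_filter

theorem mem_edges_induce {S e : Finset ℕ} :
    e ∈ (H.induce S).edges ↔ e ∈ H.edges ∧ e ⊆ S := by
  simp only [induce, mem_edges_ofEdges, mem_filter, and_iff_left_iff_imp]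
  exact fun h ↦ ⟨subset_inter (H.edges_sub e h.1) h.2, H.edges_card e h.1⟩

theorem verts_induce_of_subset {S : Finset ℕ} (h : S ⊆ H.verts) : (H.induce S).verts = S :=
  inter_eq_right.2 h

theorem IsCopyIn.mono (h : F.IsCopyIn G) (hv : G.verts ⊆ H.verts) (he : G.edges ⊆ H.edges) :
    F.IsCopyIn H :=
  let ⟨f, hf, hfv, hfe⟩ := h
  ⟨f, hf, fun v hvF ↦ hv (hfv v hvF), fun e heF ↦ he (hfe e heF)⟩

theorem IsCopyIn.exists_card_eq {W : Finset ℕ} (hW : W ⊆ H.verts)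
    (h : F.IsCopyIn (H.induce W)) :
    ∃ X ⊆ W, X.card = F.verts.card ∧ F.IsCopyIn (H.induce X) := by
  obtain ⟨f, hf, hfv, hfe⟩ := h
  rw [verts_induce_of_subset hW] at hfv
  have hX : F.verts.image f ⊆ W := image_subset_iff.2 hfv
  refine ⟨F.verts.image f, hX, card_image_of_injOn hf, f, hf, fun v hv ↦ ?_, fun e he ↦ ?_⟩
  · rw [verts_induce_of_subset (hX.trans hW)]
    exact mem_image_of_mem f hv
  · exact mem_edges_induce.2
      ⟨(mem_edges_induce.1 (hfe e he)).1, image_subset_image (F.edges_sub e he)⟩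

theorem isCopyIn_of_edges_eq_empty (hF : F.edges = ∅) (h : F.verts.card ≤ H.verts.card) :
    F.IsCopyIn H := by
  obtain ⟨f, hf, hinj⟩ := F.verts.finite_toSet.exists_injOn_of_encard_le
    (t := (H.verts : Set ℕ)) (by simpa only [Set.encard_coe_eq_coe_finsetCard, Nat.cast_le])
  exact ⟨f, hinj, fun v hv ↦ hf hv, by simp [hF]⟩

theorem le_card_verts_of_edges_nonempty (hF : F.edges.Nonempty) : r ≤ F.verts.card :=
  let ⟨e, he⟩ := hF
  (F.edges_card e he).ge.trans (card_le_card (F.edges_sub e he))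

theorem edges_subset_powersetCard (H : HGraph r) : H.edges ⊆ powersetCard r H.verts :=
  fun e he ↦ mem_powersetCard.2 ⟨H.edges_sub e he, H.edges_card e he⟩

theorem card_edges_le_choose (H : HGraph r) : H.edges.card ≤ H.verts.card.choose r :=
  card_powersetCard r H.verts ▸ card_le_card H.edges_subset_powersetCard

theorem card_filter_subset_edges_le_choose (H : HGraph r) (X : Finset ℕ) :
    (H.edges.filter (X ⊆ ·)).card ≤ H.verts.card.choose (r - X.card) := by
  rw [← card_powersetCard]
  refine card_le_card_of_injOn (· \ X) (fun e he ↦ ?_) fun e he e' he' h ↦ ?_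
  · obtain ⟨he, hX⟩ := mem_filter.1 he
    exact mem_powersetCard.2 ⟨sdiff_subset.trans (H.edges_sub e he),
      by rw [card_sdiff_of_subset hX, H.edges_card e he]⟩
  · rw [← sdiff_union_of_subset (mem_filter.1 he).2, ← sdiff_union_of_subset (mem_filter.1 he').2]
    exact congrArg (· ∪ X) h

theorem deg_le_choose (H : HGraph r) (v : ℕ) : H.deg v ≤ H.verts.card.choose (r - 1) := by
  simpa [deg] using H.card_filter_subset_edges_le_choose {v}

theorem deg_le_maxDeg {v : ℕ} (hv : v ∈ H.verts) : H.deg v ≤ H.maxDeg :=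
  le_sup (f := H.deg) hv

theorem deg_le_deg_induce_sdiff_add {U : Finset ℕ} {v : ℕ} (hv : v ∉ U) :
    H.deg v ≤
      (H.induce (H.verts \ U)).deg v + U.card * H.verts.card.choose (r - 2) := by
  have hsub : H.edges.filter (v ∈ ·) ⊆ (H.induce (H.verts \ U)).edges.filter (v ∈ ·) ∪
      U.biUnion fun w ↦ H.edges.filter ({v, w} ⊆ ·) := by
    intro e he
    obtain ⟨he, hve⟩ := mem_filter.1 he
    by_cases hU : Disjoint e U
    · exact mem_union_left _ (mem_filter.2
        ⟨mem_edges_induce.2 ⟨he, subset_sdiff.2 ⟨H.edges_sub e he, hU⟩⟩, hve⟩)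
    · obtain ⟨w, hwe, hwU⟩ := not_disjoint_iff.1 hU
      exact mem_union_right _ (mem_biUnion.2 ⟨w, hwU, mem_filter.2
        ⟨he, insert_subset hve (singleton_subset_iff.2 hwe)⟩⟩)
  refine (card_le_card hsub).trans ((card_union_le _ _).trans (Nat.add_le_add_left ?_ _))
  refine card_biUnion_le_card_mul _ _ _ fun w hw ↦ ?_
  simpa [card_pair (ne_of_mem_of_not_mem hw hv).symm] using
    H.card_filter_subset_edges_le_choose {v, w}

theorem card_filter_not_disjoint_edges_le {L : Finset ℕ} (hL : L ⊆ H.verts) :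
    (H.edges.filter (¬ Disjoint · L)).card ≤
      H.verts.card.choose r - (H.verts.card - L.card).choose r := by
  rw [← card_sdiff_of_subset hL, ← card_powersetCard, ← card_powersetCard,
    ← card_sdiff_of_subset (powersetCard_mono sdiff_subset)]
  refine card_le_card fun e he ↦ ?_
  obtain ⟨he, heL⟩ := mem_filter.1 he
  exact mem_sdiff.2 ⟨H.edges_subset_powersetCard he,
    fun h ↦ heL (subset_sdiff.1 (mem_powersetCard.1 h).1).2⟩

theorem card_edges_le_add_sum_deg_add {L : Finset ℕ} (hL : L ⊆ H.verts) (B : Finset ℕ) :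
    H.edges.card ≤ (H.verts.card.choose r - (H.verts.card - L.card).choose r) +
      ∑ v ∈ B, H.deg v + (H.induce ((H.verts \ L) \ B)).edges.card := by
  have hsub : H.edges ⊆ H.edges.filter (¬ Disjoint · L) ∪
      B.biUnion (fun v ↦ H.edges.filter (v ∈ ·)) ∪ (H.induce ((H.verts \ L) \ B)).edges := by
    intro e he
    by_cases heL : Disjoint e L
    · by_cases heB : Disjoint e B
      · exact mem_union_right _ (mem_edges_induce.2
          ⟨he, subset_sdiff.2 ⟨subset_sdiff.2 ⟨H.edges_sub e he, heL⟩, heB⟩⟩)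
      · obtain ⟨v, hve, hvB⟩ := not_disjoint_iff.1 heB
        exact mem_union_left _ (mem_union_right _
          (mem_biUnion.2 ⟨v, hvB, mem_filter.2 ⟨he, hve⟩⟩))
    · exact mem_union_left _ (mem_union_left _ (mem_filter.2 ⟨he, heL⟩))
  refine (card_le_card hsub).trans ((card_union_le _ _).trans (Nat.add_le_add_right ?_ _))
  exact (card_union_le _ _).trans
    (Nat.add_le_add (card_filter_not_disjoint_edges_le hL) card_biUnion_le)

theorem card_edges_le_induce_sdiff_add (H : HGraph r) (U : Finset ℕ) :
    H.edges.card ≤ (H.induce (H.verts \ U)).edges.card +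
      U.card * H.verts.card.choose (r - 1) := by
  have h := card_edges_le_add_sum_deg_add (empty_subset H.verts) U
  rw [card_empty, Nat.sub_zero, Nat.sub_self, zero_add, sdiff_empty, add_comm] at h
  exact h.trans (Nat.add_le_add_left (sum_le_card_nsmul _ _ _ fun v _ ↦ H.deg_le_choose v) _)

theorem mem_edges_completeOn {W e : Finset ℕ} :
    e ∈ (completeOn r W).edges ↔ e ⊆ W ∧ e.card = r := by
  rw [completeOn, mem_edges_ofEdges, mem_powersetCard, and_self]

theorem mem_edges_join {e : Finset ℕ} :
    e ∈ (G.join H).edges ↔ e ∈ G.edges ∨ e ∈ H.edges ∨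
      (e ⊆ G.verts ∪ H.verts ∧ e.card = r) ∧ ¬ Disjoint e G.verts ∧ ¬ Disjoint e H.verts := by
  rw [HGraph.join, mem_edges_ofEdges]
  simp only [mem_union, mem_filter, mem_powersetCard, not_disjoint_iff_nonempty_inter, or_assoc]
  refine ⟨And.left, fun h ↦ ⟨h, ?_⟩⟩
  rcases h with h | h | h
  · exact ⟨(G.edges_sub e h).trans subset_union_left, G.edges_card e h⟩
  · exact ⟨(H.edges_sub e h).trans subset_union_right, H.edges_card e h⟩
  · exact h.1

theorem edges_completeOn_join (hr : 1 ≤ r) {W : Finset ℕ} (hW : Disjoint W G.verts) :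
    ((completeOn r W).join G).edges =
      (powersetCard r (W ∪ G.verts) \ powersetCard r G.verts) ∪ G.edges := by
  ext e
  rw [mem_edges_join, mem_edges_completeOn, mem_union, Finset.mem_sdiff, mem_powersetCard,
    mem_powersetCard, show (completeOn r W).verts = W from rfl]
  constructor
  · rintro (⟨heW, hcard⟩ | heG | ⟨he, heW, -⟩)
    · refine Or.inl ⟨⟨heW.trans subset_union_left, hcard⟩, fun h ↦ ?_⟩
      have : e = ∅ := disjoint_self.1 ((hW.mono_left heW).mono_right h.1)
      rw [this, card_empty] at hcard
      omega
    · exact Or.inr heG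
    · exact Or.inl ⟨he, fun h ↦ heW (hW.symm.mono_left h.1)⟩
  · rintro (⟨⟨he, hcard⟩, heG⟩ | heG)
    · by_cases heW : e ⊆ W
      · exact Or.inl ⟨heW, hcard⟩
      · exact Or.inr (Or.inr ⟨⟨he, hcard⟩,
          fun h ↦ heG ⟨h.left_le_of_le_sup_left he, hcard⟩,
          fun h ↦ heW (h.left_le_of_le_sup_right he)⟩)
    · exact Or.inr (Or.inl heG)

theorem card_edges_completeOn_join (hr : 1 ≤ r) {W : Finset ℕ} (hW : Disjoint W G.verts) :
    ((completeOn r W).join G).edges.card =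
      (W.card + G.verts.card).choose r - G.verts.card.choose r + G.edges.card := by
  rw [edges_completeOn_join hr hW, card_union_of_disjoint
      (disjoint_sdiff_self_left.mono_right G.edges_subset_powersetCard),
    card_sdiff_of_subset (powersetCard_mono subset_union_right), card_powersetCard,
    card_powersetCard, card_union_of_disjoint hW]

end HGraph

section Extremal

open HGraph

variable {r : ℕ}

theorem bddAbove_card_edges (n : ℕ) (P : HGraph r → Prop) :
    BddAbove {x | ∃ H : HGraph r, H.verts.card = n ∧ P H ∧ H.edges.card = x} := by
  refine ⟨n.choose r, ?_⟩
  rintro _ ⟨H, rfl, -, rfl⟩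
  exact H.card_edges_le_choose

theorem card_edges_le_exN {F H : HGraph r} (h : ¬ F.IsCopyIn H) :
    H.edges.card ≤ exN r H.verts.card F :=
  le_csSup (bddAbove_card_edges _ _) ⟨H, rfl, h, rfl⟩

theorem exists_card_edges_eq_exFamN {k : ℕ} {F : Fin k → HGraph r}
    (hF : ∀ i, (F i).edges.Nonempty) (n : ℕ) :
    ∃ H : HGraph r, H.verts.card = n ∧ (∀ i, ¬ (F i).IsCopyIn H) ∧
      H.edges.card = exFamN r k F n := by
  refine Nat.sSup_mem (s := {x | ∃ H : HGraph r, H.verts.card = n ∧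
    (∀ i, ¬ (F i).IsCopyIn H) ∧ H.edges.card = x}) ?_ (bddAbove_card_edges n _)
  refine ⟨_, emptyOn r (Finset.range n), Finset.card_range n, fun i ⟨f, _, _, hf⟩ ↦ ?_, rfl⟩
  obtain ⟨e, he⟩ := hF i
  exact Finset.notMem_empty _ (mem_edges_ofEdges.1 (hf e he)).1

end Extremal

section Packing

open Finset HGraph

variable {ι : Type*} {r : ℕ} {G : ι → HGraph r} {H : HGraph r}

/-- A packing of the hypergraphs `G p`, `p ∈ I`, into `A`: pairwise disjoint sets `S p ⊆ A`, each
of the size of `G p` and spanning a copy of it in `H`. Values of `S` outside `I` are irrelevant, so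
that partial packings of the whole family `G` are covered. -/
structure IsPacking (G : ι → HGraph r) (H : HGraph r) (A : Finset ℕ) (I : Finset ι)
    (S : ι → Finset ℕ) : Prop where
  subset : ∀ p ∈ I, S p ⊆ A
  card_eq : ∀ p ∈ I, (S p).card = (G p).verts.card
  isCopyIn : ∀ p ∈ I, (G p).IsCopyIn (H.induce (S p))
  pairwiseDisjoint : (I : Set ι).PairwiseDisjoint S

namespace IsPacking

variable {A : Finset ℕ} {I : Finset ι} {S : ι → Finset ℕ}

theorem mono (hS : IsPacking G H A I S) {A' : Finset ℕ} (h : A ⊆ A') : IsPacking G H A' I S where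
  __ := hS
  subset p hp := (hS.subset p hp).trans h

theorem card_biUnion_le (hS : IsPacking G H A I S) {m : ℕ} (hm : ∀ p, (G p).verts.card ≤ m) :
    (I.biUnion S).card ≤ m * I.card :=
  mul_comm m _ ▸ card_biUnion_le_card_mul I S m fun p hp ↦ hS.card_eq p hp ▸ hm p

theorem exists_insert [DecidableEq ι] (hS : IsPacking G H A I S) (hA : A ⊆ H.verts) {q : ι}
    (hq : q ∉ I) (hcopy : (G q).IsCopyIn (H.induce (A \ I.biUnion S))) :
    ∃ S', IsPacking G H A (insert q I) S' := by
  obtain ⟨X, hX, hXcard, hXcopy⟩ := hcopy.exists_card_eq (sdiff_subset.trans hA)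
  obtain ⟨hXA, hXS⟩ := subset_sdiff.1 hX
  have hS' : ∀ p ∈ I, Function.update S q X p = S p := fun p hp ↦
    Function.update_of_ne (ne_of_mem_of_not_mem hp hq) _ _
  refine ⟨Function.update S q X, ?_, ?_, ?_, ?_⟩
  · simpa +contextual [hS', forall_mem_insert] using ⟨hXA, hS.subset⟩
  · simpa +contextual [hS', forall_mem_insert] using ⟨hXcard, hS.card_eq⟩
  · simpa +contextual [hS', forall_mem_insert] using ⟨hXcopy, hS.isCopyIn⟩
  · rw [coe_insert]
    refine Set.PairwiseDisjoint.insert (fun p hp p' hp' ↦ ?_) fun p hp _ ↦ ?_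
    · simpa only [Function.onFun, hS' p hp, hS' p' hp'] using hS.pairwiseDisjoint hp hp'
    · rw [Function.update_self, hS' p hp]
      exact (disjoint_biUnion_right _ _ _).1 hXS p hp

theorem exists_maximal [Finite ι] (G : ι → HGraph r) (hA : A ⊆ H.verts) :
    ∃ I S, IsPacking G H A I S ∧
      ∀ q ∉ I, ¬ (G q).IsCopyIn (H.induce (A \ I.biUnion S)) := by
  classical
  obtain ⟨I, ⟨S, hS⟩, hmax⟩ := (Set.toFinite {I | ∃ S, IsPacking G H A I S}).exists_maximal
    ⟨∅, fun _ ↦ ∅, by constructor <;> simp⟩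
  exact ⟨I, S, hS, fun q hq hcopy ↦
    hq (hmax (hS.exists_insert hA hq hcopy) (subset_insert q I) (mem_insert_self q I))⟩

theorem exists_univ [Fintype ι] {m M : ℕ} (hm : ∀ p, (G p).verts.card ≤ m) {L : Finset ℕ}
    (hLV : L ⊆ H.verts) (hM : L.card + m * Fintype.card ι ≤ M)
    (hcopy : ∀ v ∈ L, ∀ U ⊆ H.verts, v ∉ U → U.card ≤ M →
      ∀ q, (G q).IsCopyIn (H.induce (H.verts \ U)))
    (hS : IsPacking G H (H.verts \ L) I S) (hI : Fintype.card ι ≤ I.card + L.card) :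
    ∃ S, IsPacking G H H.verts univ S := by
  classical
  induction L using Finset.induction_on generalizing I S with
  | empty =>
    obtain rfl : I = univ := (card_eq_iff_eq_univ I).1 (le_antisymm (card_le_univ I) hI)
    exact ⟨S, hS.mono sdiff_subset⟩
  | insert v L hv ih =>
    obtain ⟨hvV, hLV⟩ := insert_subset_iff.1 hLV
    rw [card_insert_of_notMem hv] at hM hI
    by_cases hIu : I = univ
    · exact ⟨S, hIu ▸ hS.mono sdiff_subset⟩
    obtain ⟨q, hq⟩ : ∃ q, q ∉ I := by simpa [eq_univ_iff_forall] using hIu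
    have hS' : IsPacking G H (H.verts \ L) I S :=
      hS.mono (sdiff_subset_sdiff subset_rfl (subset_insert v L))
    have hvS : v ∉ I.biUnion S := fun h ↦
      (mem_sdiff.1 (biUnion_subset.2 hS.subset h)).2 (mem_insert_self v L)
    have hSV : I.biUnion S ⊆ H.verts :=
      biUnion_subset.2 fun p hp ↦ (hS.subset p hp).trans sdiff_subset
    have hcard : (L ∪ I.biUnion S).card ≤ M := by
      have := hS.card_biUnion_le hm
      have := Nat.mul_le_mul_left m (card_le_univ I)
      have := card_union_le L (I.biUnion S)
      omega
    have hqcopy := hcopy v (mem_insert_self v L) (L ∪ I.biUnion S) (union_subset hLV hSV)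
      (by simp only [mem_union, hv, hvS, or_self, not_false_eq_true]) hcard q
    rw [← sup_eq_union, ← sdiff_sdiff_left] at hqcopy
    obtain ⟨S', hS''⟩ := hS'.exists_insert sdiff_subset hq hqcopy
    refine ih hLV (by omega) (fun u hu ↦ hcopy u (mem_insert_of_mem hu)) hS'' ?_
    rw [card_insert_of_notMem hq]
    omega

end IsPacking

theorem HGraph.exists_high_degree_subset (H : HGraph r) (t : ℕ) (T : ℝ) :
    ∃ L ⊆ H.verts, L.card ≤ t ∧ (∀ v ∈ L, T ≤ H.deg v) ∧
      (L.card < t → ∀ v ∈ H.verts \ L, (H.deg v : ℝ) ≤ T) := by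
  let D := H.verts.filter fun v ↦ T ≤ H.deg v
  obtain ⟨L, hLD, hL⟩ := exists_subset_card_eq (min_le_right t D.card)
  refine ⟨L, hLD.trans (filter_subset _ _), by omega, fun v hv ↦ (mem_filter.1 (hLD hv)).2,
    fun hlt v hv ↦ ?_⟩
  have hLeq : L = D := eq_of_subset_of_card_le hLD (by omega)
  obtain ⟨hvV, hvL⟩ := Finset.mem_sdiff.1 hv
  by_contra! h
  exact hvL (hLeq ▸ mem_filter.2 ⟨hvV, h.le⟩)

theorem exists_isPacking_univ_or_card_edges_le [Fintype ι] {m t : ℕ} {T : ℝ}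
    (hm : ∀ p, (G p).verts.card ≤ m) (hι : Fintype.card ι = t + 1)
    (hcopy : ∀ v ∈ H.verts, T ≤ H.deg v → ∀ U ⊆ H.verts, v ∉ U → U.card ≤ t + m * (t + 1) →
      ∀ q, (G q).IsCopyIn (H.induce (H.verts \ U))) :
    (∃ S, IsPacking G H H.verts univ S) ∨
      ∃ l s b q, l + s = t ∧ b ≤ m * s ∧
        H.edges.card ≤ ((H.verts.card.choose r - (H.verts.card - l).choose r : ℕ) : ℝ) + b * T +
          exN r (H.verts.card - l - b) (G q) := by
  obtain ⟨L, hLV, hLt, hLT, hT⟩ := H.exists_high_degree_subset t T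
  obtain ⟨I, S, hS, hmax⟩ := IsPacking.exists_maximal G (sdiff_subset (s := H.verts) (t := L))
  by_cases hI : Fintype.card ι ≤ I.card + L.card
  · exact Or.inl (IsPacking.exists_univ hm hLV (by rw [hι]; gcongr)
      (fun v hv ↦ hcopy v (hLV hv) (hLT v hv)) hS hI)
  obtain ⟨q, hq⟩ : ∃ q, q ∉ I := by
    by_contra! h
    exact hI ((card_eq_iff_eq_univ I).2 (eq_univ_iff_forall.2 h) ▸ Nat.le_add_right _ _)
  set B := I.biUnion S
  have hBL : B ⊆ H.verts \ L := biUnion_subset.2 hS.subset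
  have hBcard : B.card ≤ m * (t - L.card) :=
    (hS.card_biUnion_le hm).trans (Nat.mul_le_mul_left m (by omega))
  have hdeg : ∑ v ∈ B, (H.deg v : ℝ) ≤ B.card * T := by
    rcases hLt.lt_or_eq with hlt | heq
    · exact nsmul_eq_mul B.card T ▸ sum_le_card_nsmul B _ T fun v hv ↦ hT hlt v (hBL hv)
    · have : B = ∅ := card_eq_zero.1 (by simpa [heq] using hBcard)
      simp only [this, sum_empty, card_empty, Nat.cast_zero, zero_mul, le_refl]
  have hex : (H.induce ((H.verts \ L) \ B)).edges.card ≤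
      exN r (H.verts.card - L.card - B.card) (G q) := by
    have hcard := verts_induce_of_subset (sdiff_subset.trans sdiff_subset :
      (H.verts \ L) \ B ⊆ H.verts) ▸ card_edges_le_exN (hmax q hq)
    rwa [card_sdiff_of_subset hBL, card_sdiff_of_subset hLV] at hcard
  refine Or.inr ⟨L.card, t - L.card, B.card, q, by omega, hBcard, ?_⟩
  calc (H.edges.card : ℝ)
      ≤ ((H.verts.card.choose r - (H.verts.card - L.card).choose r : ℕ) : ℝ) +
          ∑ v ∈ B, (H.deg v : ℝ) + ((H.induce ((H.verts \ L) \ B)).edges.card : ℝ) :=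
        mod_cast card_edges_le_add_sum_deg_add hLV B
    _ ≤ _ := by gcongr

end Packing

section MixedMatching

open Finset HGraph

variable {r k : ℕ} {F : Fin k → HGraph r} {ts : Fin k → ℕ} {H : HGraph r}

theorem IsPacking.hasMixedMatching {S : (Σ i : Fin k, Fin (ts i)) → Finset ℕ}
    (hS : IsPacking (fun p ↦ F p.1) H H.verts univ S) : HasMixedMatching r k F ts H :=
  ⟨fun i j ↦ S ⟨i, j⟩,
    fun _ _ ↦ ⟨hS.subset _ (mem_univ _), hS.card_eq _ (mem_univ _)⟩,
    fun p q hpq ↦ hS.pairwiseDisjoint (mem_coe.2 (mem_univ p)) (mem_coe.2 (mem_univ q)) hpq,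
    fun i j ↦ hS.isCopyIn ⟨i, j⟩ (mem_univ _)⟩

theorem exists_disjoint_of_card_lt {ι : Type*} [Fintype ι] {S : ι → Finset ℕ}
    (hS : Pairwise (Function.onFun Disjoint S)) {W : Finset ℕ} (hW : W.card < Fintype.card ι) :
    ∃ p, Disjoint W (S p) := by
  by_contra! h
  refine hW.not_ge ((card_le_card_biUnion (s := univ) (f := fun p ↦ W ∩ S p) ?_ ?_).trans
    (card_le_card (biUnion_subset.2 fun p _ ↦ inter_subset_left)))
  · exact fun p _ q _ hpq ↦ (hS hpq).mono inter_subset_right inter_subset_right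
  · exact fun p _ ↦ not_disjoint_iff_nonempty_inter.1 (h p)

theorem not_hasMixedMatching_completeOn_join (hr : 1 ≤ r)
    (hH : ∀ i, ¬ (F i).IsCopyIn H) {W : Finset ℕ} (hW : W.card < ∑ i, ts i) :
    ¬ HasMixedMatching r k F ts ((completeOn r W).join H) := by
  rintro ⟨S, hS, hdisj, hcopy⟩
  obtain ⟨⟨i, j⟩, hij⟩ := exists_disjoint_of_card_lt
    (S := fun p : Σ i, Fin (ts i) ↦ S p.1 p.2) hdisj (by simpa using hW)
  have hSH : S i j ⊆ H.verts := hij.symm.left_le_of_le_sup_left (hS i j).1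
  refine hH i ((hcopy i j).mono ?_ fun e he ↦ ?_)
  · exact inter_subset_right.trans hSH
  obtain ⟨he, heS⟩ := mem_edges_induce.1 he
  have heW : Disjoint e W := (hij.mono_right heS).symm
  rcases mem_edges_join.1 he with h | h | h
  · obtain ⟨hsub, hcard⟩ := mem_edges_completeOn.1 h
    have : e = ∅ := disjoint_self.1 (heW.mono_right hsub)
    rw [this, card_empty] at hcard
    omega
  · exact h
  · exact absurd heW h.2.1

theorem choose_sub_choose_add_exFamN_le_exMixedN (hr : 1 ≤ r) (hF : ∀ i, (F i).edges.Nonempty)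
    {n t : ℕ} (hts : t < ∑ i, ts i) (htn : t ≤ n) :
    n.choose r - (n - t).choose r + exFamN r k F (n - t) ≤ exMixedN r k F ts n := by
  obtain ⟨H, hHn, hH, hHcard⟩ := exists_card_edges_eq_exFamN hF (n - t)
  obtain ⟨V, hHV, hV⟩ := Infinite.exists_superset_card_eq H.verts n (by omega)
  have hWcard : (V \ H.verts).card = t := by
    rw [card_sdiff_of_subset hHV, hHn, hV]
    omega
  have hcard := card_edges_completeOn_join hr (disjoint_sdiff_self_left (x := H.verts) (y := V))
  rw [hWcard, hHn, Nat.add_sub_of_le htn, hHcard] at hcard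
  refine le_csSup (bddAbove_card_edges n _) ⟨_, ?_,
    not_hasMixedMatching_completeOn_join hr hH (hWcard.trans_lt hts), hcard⟩
  exact (congrArg card (sdiff_union_of_subset hHV)).trans hV

end MixedMatching

section Binomial

theorem choose_succ_add_mul_choose_le (n s j : ℕ) :
    n.choose (j + 1) + s * n.choose j ≤ (n + s).choose (j + 1) := by
  induction s with
  | zero => simp
  | succ s ih =>
    rw [← add_assoc, Nat.choose_succ_succ', add_one_mul]
    linarith [Nat.choose_le_choose j (Nat.le_add_right n s)]

theorem choose_succ_add_le (n s j : ℕ) :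
    (n + s).choose (j + 1) ≤ n.choose (j + 1) + s * (n + s).choose j := by
  induction s with
  | zero => simp
  | succ s ih =>
    rw [← add_assoc, Nat.choose_succ_succ', add_one_mul]
    have := Nat.choose_le_choose j (n + s).le_succ
    linarith [Nat.mul_le_mul_left s this]

variable {r n u : ℕ} {w : ℝ}

theorem mul_choose_sub_two_le (hr : 2 ≤ r) (hn : 2 * r ≤ n) (hw : 0 ≤ w)
    (hu : 2 * r * u ≤ w * n) : u * (n.choose (r - 2) : ℝ) ≤ w * n.choose (r - 1) := by
  obtain ⟨j, rfl⟩ := Nat.exists_eq_add_of_le' hr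
  have hjn : (2 * j : ℝ) ≤ n := mod_cast (by omega : 2 * j ≤ n)
  have hle : (j + 1) * u ≤ w * (n - j) := by
    push_cast at hu
    linarith [mul_le_mul_of_nonneg_left hjn hw, u.cast_nonneg (α := ℝ)]
  have hchoose : (n.choose (j + 1) : ℝ) * (j + 1) = n.choose j * (n - j) := by
    rw [← Nat.cast_sub (by omega)]
    exact mod_cast Nat.choose_succ_right_eq n j
  refine le_of_mul_le_mul_right ?_ (by positivity : (0 : ℝ) < j + 1)
  calc (u * n.choose j * (j + 1) : ℝ) = n.choose j * ((j + 1) * u) := by ring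
    _ ≤ n.choose j * (w * (n - j)) := by gcongr
    _ = w * n.choose (j + 1) * (j + 1) := by rw [mul_assoc w, hchoose]; ring

theorem one_sub_mul_choose_le_choose_sub (hr : 2 ≤ r) (hn : 2 * r ≤ n) (hw : 0 ≤ w)
    (hun : u ≤ n) (hu : 2 * r * u ≤ w * n) :
    (1 - w) * (n.choose (r - 1) : ℝ) ≤ (n - u).choose (r - 1) := by
  have hdrop := mul_choose_sub_two_le hr hn hw hu
  obtain ⟨j, rfl⟩ := Nat.exists_eq_add_of_le' hr
  obtain ⟨n, rfl⟩ := Nat.exists_eq_add_of_le' hun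
  have hle : ((n + u).choose (j + 1) : ℝ) ≤ n.choose (j + 1) + u * (n + u).choose j :=
    mod_cast choose_succ_add_le n u j
  simp only [Nat.add_sub_cancel, Nat.add_one_sub_one] at hdrop ⊢
  linarith

theorem mul_choose_eq_mul_choose_pred {n r : ℕ} (hn : 1 ≤ n) (hr : 1 ≤ r) :
    r * n.choose r = n * (n - 1).choose (r - 1) := by
  obtain ⟨n, rfl⟩ := Nat.exists_eq_add_of_le' hn
  obtain ⟨r, rfl⟩ := Nat.exists_eq_add_of_le' hr
  simpa only [Nat.add_sub_cancel, mul_comm (r + 1)] using (Nat.add_one_mul_choose_eq n r).symm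

theorem mul_choose_le_mul_choose_pred {n r : ℕ} (hn : 1 ≤ n) (hr : 1 ≤ r) :
    r * n.choose r ≤ n * n.choose (r - 1) :=
  (mul_choose_eq_mul_choose_pred hn hr).trans_le
    (Nat.mul_le_mul_left n (Nat.choose_le_choose _ n.pred_le))

theorem mul_choose_le_two_mul_sub_mul_choose_sub (hr : 2 ≤ r) (hn : 2 * r ≤ n) (hw : 0 ≤ w)
    (hw' : w ≤ 1 / 4) (hun : u ≤ n) (hu : 2 * r * u ≤ w * n) :
    (n * n.choose (r - 1) : ℝ) ≤ 2 * ((n - u : ℕ) * (n - u).choose (r - 1)) := by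
  have hsub : (3 / 4 : ℝ) * n ≤ (n - u : ℕ) := by
    rw [Nat.cast_sub hun]
    have hr' : (2 : ℝ) ≤ r := mod_cast hr
    nlinarith
  have hchoose : (3 / 4 : ℝ) * n.choose (r - 1) ≤ (n - u).choose (r - 1) :=
    (one_sub_mul_choose_le_choose_sub hr hn hw hun hu).trans' (by gcongr; linarith)
  calc (n * n.choose (r - 1) : ℝ)
      ≤ 2 * ((3 / 4 * n) * (3 / 4 * n.choose (r - 1))) := by
        linarith [(by positivity : (0 : ℝ) ≤ n * n.choose (r - 1))]
    _ ≤ 2 * ((n - u : ℕ) * (n - u).choose (r - 1)) := by gcongr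

end Binomial

section Density

open HGraph

variable {r : ℕ} {F : HGraph r} {x : ℝ}

theorem exN_eq_zero_of_edges_eq_empty (hF : F.edges = ∅) {n : ℕ} (hn : F.verts.card ≤ n) :
    exN r n F = 0 := by
  have hempty : {x | ∃ H : HGraph r, H.verts.card = n ∧ ¬ F.IsCopyIn H ∧ H.edges.card = x} = ∅ :=
    Set.eq_empty_of_forall_notMem fun _ ⟨_, hH, hFH, _⟩ ↦
      hFH (isCopyIn_of_edges_eq_empty hF (hn.trans_eq hH.symm))
  rw [exN, hempty, csSup_empty, bot_eq_zero]

theorem HasTuranDensity.nonneg (h : HasTuranDensity r F x) : 0 ≤ x :=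
  ge_of_tendsto' h fun _ ↦ by positivity

theorem HasTuranDensity.edges_nonempty (h : HasTuranDensity r F x) (hx : 0 < x) :
    F.edges.Nonempty := by
  by_contra! hF
  refine hx.ne' (tendsto_nhds_unique h (tendsto_const_nhds.congr' ?_))
  filter_upwards [eventually_ge_atTop F.verts.card] with n hn
  rw [exN_eq_zero_of_edges_eq_empty hF hn, Nat.cast_zero, zero_div]

theorem HasTuranDensity.eventually_abs_sub_le (h : HasTuranDensity r F x) {η : ℝ} (hη : 0 < η) :
    ∀ᶠ n : ℕ in atTop, |(exN r n F : ℝ) - x * n.choose r| ≤ η * n.choose r := by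
  filter_upwards [Metric.tendsto_nhds.1 h η hη, eventually_ge_atTop r] with n hn hrn
  have hpos : (0 : ℝ) < n.choose r := mod_cast Nat.choose_pos hrn
  rw [Real.dist_eq, div_sub' hpos.ne', abs_div, abs_of_pos hpos, div_lt_iff₀ hpos,
    mul_comm _ x] at hn
  exact hn.le

theorem exN_le_add_mul_choose {n n' : ℕ} {p η : ℝ} (hxp : x ≤ p) (hp : 0 ≤ p) (hη : 0 ≤ η)
    (hn : n' ≤ n) (h : |(exN r n' F : ℝ) - x * n'.choose r| ≤ η * n'.choose r) :
    (exN r n' F : ℝ) ≤ (p + η) * n.choose r := by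
  calc (exN r n' F : ℝ) ≤ (x + η) * n'.choose r := by linarith [(abs_le.1 h).2]
    _ ≤ (p + η) * n.choose r := by gcongr

theorem eventually_exN_le_of_density_lt {F' : HGraph r} {x' : ℝ} (h : HasTuranDensity r F x)
    (h' : HasTuranDensity r F' x') (hlt : x < x') :
    ∀ᶠ n : ℕ in atTop, exN r n F ≤ exN r n F' := by
  filter_upwards [h.eventually_lt h' hlt, eventually_ge_atTop r] with n hn hrn
  have hpos : (0 : ℝ) < n.choose r := mod_cast Nat.choose_pos hrn
  exact mod_cast ((div_lt_div_iff_of_pos_right hpos).1 hn).le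

theorem eventually_exists_exN_le_of_maximal_density {k : ℕ} {F : Fin k → HGraph r}
    {π : Fin k → ℝ} (hπ : ∀ i, HasTuranDensity r (F i) (π i)) {i₀ : Fin k}
    (hmax : ∀ i, π i ≤ π i₀) :
    ∀ᶠ n : ℕ in atTop, ∀ i, ∃ j, π j = π i₀ ∧ exN r n (F i) ≤ exN r n (F j) := by
  refine eventually_all.2 fun i ↦ ?_
  rcases (hmax i).eq_or_lt with heq | hlt
  · exact Eventually.of_forall fun n ↦ ⟨i, heq, le_rfl⟩
  · filter_upwards [eventually_exN_le_of_density_lt (hπ i) (hπ i₀) hlt] with n hn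
    exact ⟨i₀, rfl, hn⟩

theorem abs_dN_sub_le {n : ℕ} {x η : ℝ} (hr : 1 ≤ r) (hn : 1 ≤ n)
    (h : |(exN r n F : ℝ) - x * n.choose r| ≤ η * n.choose r) :
    |dN r n F - x * (n - 1).choose (r - 1)| ≤ η * (n - 1).choose (r - 1) := by
  have hn' : (0 : ℝ) < n := mod_cast hn
  have hchoose : ((n - 1).choose (r - 1) : ℝ) = r / n * n.choose r := by
    rw [div_mul_eq_mul_div, eq_div_iff hn'.ne', mul_comm]
    exact mod_cast (mul_choose_eq_mul_choose_pred hn hr).symm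
  calc |dN r n F - x * (n - 1).choose (r - 1)|
      = r / n * |(exN r n F : ℝ) - x * n.choose r| := by
        rw [hchoose, ← abs_of_nonneg (by positivity : (0 : ℝ) ≤ r / n), ← abs_mul,
          abs_of_nonneg (by positivity : (0 : ℝ) ≤ r / n), dN]
        ring_nf
    _ ≤ r / n * (η * n.choose r) := by gcongr
    _ = η * (n - 1).choose (r - 1) := by rw [hchoose]; ring

end Density

/-- The hypotheses on `F` available at a large number `n` of vertices: `ex(n, F)` is within
`η * C(n, r)` of `π * C(n, r)`, and `F` is bounded and smooth at `n` with error terms `c`,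
`(1 - π) / (4 * m)` and `(1 - π) / (8 * m)` times `C(n, r - 1)`. -/
structure IsTameAt (r n : ℕ) (F : HGraph r) (m : ℕ) (π c η : ℝ) : Prop where
  density : |(exN r n F : ℝ) - π * n.choose r| ≤ η * n.choose r
  bounded : BoundedAt r n F (c * n.choose (r - 1)) ((1 - π) / (4 * m) * n.choose (r - 1))
  smooth : SmoothAt r n F ((1 - π) / (8 * m) * n.choose (r - 1))

section Tame

open Finset HGraph

variable {r m n u : ℕ} {F H : HGraph r} {π p c η w : ℝ}

theorem BoundedAt.isCopyIn {f₁ f₂ : ℝ} (hF : BoundedAt r H.verts.card F f₁ f₂)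
    (hd : dN r H.verts.card F - f₁ ≤ H.avgDeg) {v : ℕ} (hv : v ∈ H.verts)
    (hdeg : dN r H.verts.card F + f₂ < H.deg v) : F.IsCopyIn H := by
  by_contra hFH
  have hle : (H.deg v : ℝ) ≤ H.maxDeg := mod_cast deg_le_maxDeg hv
  linarith [hF H rfl hFH hd]

theorem abs_sub_sub_mul_le_of_step {f : ℕ → ℝ} {x E : ℝ} {a b : ℕ} (hab : a ≤ b)
    (h : ∀ z, a ≤ z → z < b → |f (z + 1) - f z - x| ≤ E) :
    |f b - f a - (b - a) * x| ≤ (b - a) * E := by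
  induction b, hab using Nat.le_induction with
  | base => simp
  | succ b hab ih =>
    calc |f (b + 1) - f a - ((b + 1 : ℕ) - a) * x|
        = |(f (b + 1) - f b - x) + (f b - f a - (b - a) * x)| := by
          push_cast
          ring_nf
      _ ≤ E + (b - a) * E := (abs_add_le _ _).trans
          (add_le_add (h b hab b.lt_succ_self) (ih fun z hz hzb ↦ h z hz (hzb.trans_le b.le_succ)))
      _ = ((b + 1 : ℕ) - a) * E := by
          push_cast
          ring

theorem IsTameAt.abs_exN_succ_sub_exN_sub_le (hr : 2 ≤ r) (hn : 2 * r ≤ n) (hm : 1 ≤ m)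
    (hπ : 0 ≤ π) (hw : 0 ≤ w) (hwπ : 16 * m * w = 1 - π) (hη : η ≤ w)
    (hun : u ≤ n) (hu : 2 * r * u ≤ w * n) {z : ℕ} (hzn : z + 1 ≤ n) (hzu : n + 1 ≤ z + u)
    (hF : IsTameAt r z F m π c η) (hF' : IsTameAt r (z + 1) F m π c η) :
    |(exN r (z + 1) F : ℝ) - exN r z F - π * n.choose (r - 1)| ≤ 4 * w * n.choose (r - 1) := by
  have : (0 : ℝ) < m := mod_cast hm
  have hd := abs_le.1 (abs_dN_sub_le (by omega) (by omega) hF.density)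
  have hs := abs_le.1 hF'.smooth
  rw [deltaN, Nat.add_sub_cancel, ← hwπ,
    show 16 * m * w / (8 * m) = 2 * w by field_simp; ring] at hs
  have hC₁ := one_sub_mul_choose_le_choose_sub hr hn hw hun hu
  have hC₂ : ((n - u).choose (r - 1) : ℝ) ≤ (z - 1).choose (r - 1) :=
    mod_cast Nat.choose_le_choose _ (by omega)
  have hC₃ : ((z - 1).choose (r - 1) : ℝ) ≤ n.choose (r - 1) :=
    mod_cast Nat.choose_le_choose _ (by omega)
  have hC₄ : ((z + 1).choose (r - 1) : ℝ) ≤ n.choose (r - 1) :=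
    mod_cast Nat.choose_le_choose _ hzn
  have hπ1 : π ≤ 1 := by nlinarith
  have hηC : η * (z - 1).choose (r - 1) ≤ w * n.choose (r - 1) := by gcongr
  have hwC := mul_le_mul_of_nonneg_left hC₄ hw
  have hπC := mul_le_mul_of_nonneg_left hC₃ hπ
  have hπC' := mul_le_mul_of_nonneg_left (hC₁.trans hC₂) hπ
  have hπw : π * (w * n.choose (r - 1)) ≤ w * n.choose (r - 1) :=
    mul_le_of_le_one_left (by positivity) hπ1
  rw [abs_le]
  constructor <;> linarith

theorem mul_add_exN_le (hr : 2 ≤ r) (hn : 2 * r ≤ n) (hm : 2 ≤ m)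
    (hπ : 0 ≤ π) (hw : 0 ≤ w) (hwπ : 16 * m * w = 1 - π) (hη : η ≤ w)
    (hun : u ≤ n) (hu : 2 * r * u ≤ w * n) {l s b : ℕ} (hs : l + s + 1 ≤ u) (hb : l + b + 1 ≤ u)
    (hbs : b ≤ m * s) (hF : ∀ z, n ≤ z + u → IsTameAt r z F m π c η) :
    b * ((π + 8 * w) * n.choose (r - 1)) + exN r (n - l - b) F ≤
      ((n - l).choose r - (n - l - s).choose r : ℝ) + exN r (n - l - s) F := by
  have htel (a : ℕ) (ha : l + a + 1 ≤ u) := abs_le.1 <|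
    abs_sub_sub_mul_le_of_step (f := fun z ↦ (exN r z F : ℝ)) (Nat.sub_le (n - l) a)
      fun z hz hzl ↦ (hF z (by omega)).abs_exN_succ_sub_exN_sub_le hr hn (by omega) hπ hw hwπ hη
        hun hu (by omega) (by omega) (hF (z + 1) (by omega))
  have hb' := (htel b hb).1
  have hs' := (htel s hs).2
  rw [Nat.cast_sub (by omega : b ≤ n - l), sub_sub_cancel] at hb'
  rw [Nat.cast_sub (by omega : s ≤ n - l), sub_sub_cancel] at hs'
  have hchoose : ((n - l - s).choose r : ℝ) + s * ((1 - w) * n.choose (r - 1)) ≤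
      (n - l).choose r := by
    have hle := choose_succ_add_mul_choose_le (n - l - s) s (r - 1)
    rw [Nat.sub_add_cancel (by omega : 1 ≤ r), Nat.sub_add_cancel (by omega : s ≤ n - l)] at hle
    have hmono : ((n - u).choose (r - 1) : ℝ) ≤ (n - l - s).choose (r - 1) :=
      mod_cast Nat.choose_le_choose _ (by omega)
    calc ((n - l - s).choose r : ℝ) + s * ((1 - w) * n.choose (r - 1))
        ≤ (n - l - s).choose r + s * (n - l - s).choose (r - 1) := by
          gcongr
          exact (one_sub_mul_choose_le_choose_sub hr hn hw hun hu).trans hmono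
      _ ≤ (n - l).choose r := mod_cast hle
  have hC : (0 : ℝ) ≤ n.choose (r - 1) := Nat.cast_nonneg _
  generalize (n.choose (r - 1) : ℝ) = C at *
  have hsw : 0 ≤ s * (w * C) := by positivity
  have hbs' : (b : ℝ) * (w * C) ≤ m * s * (w * C) := by gcongr; exact mod_cast hbs
  have hms : (2 : ℝ) * (s * (w * C)) ≤ m * (s * (w * C)) := by gcongr; exact mod_cast hm
  have hsC : s * ((1 - π) * C) = 16 * (m * (s * (w * C))) := by rw [← hwπ]; ring
  linarith

theorem dN_sub_le_avgDeg_induce_sdiff (hr : 2 ≤ r) (hn : 2 * r ≤ H.verts.card)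
    (hπp : π ≤ p) (hp : 0 ≤ p) (hw : 0 ≤ w) (hw' : w ≤ 1 / 4) (hη : 0 ≤ η)
    (hηc : 8 * η ≤ c) {U : Finset ℕ} (hU : U ⊆ H.verts)
    (hUw : 2 * r * U.card ≤ w * H.verts.card) (hUc : 4 * r * U.card ≤ c * H.verts.card)
    (hF : |(exN r (H.verts.card - U.card) F : ℝ) - π * (H.verts.card - U.card).choose r| ≤
      η * (H.verts.card - U.card).choose r)
    (hE : (p - η) * H.verts.card.choose r ≤ H.edges.card) :
    dN r (H.verts.card - U.card) F - c * (H.verts.card - U.card).choose (r - 1) ≤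
      (H.induce (H.verts \ U)).avgDeg := by
  have hUn := card_le_card hU
  have hsub : (H.edges.card : ℝ) ≤ (H.induce (H.verts \ U)).edges.card +
      U.card * H.verts.card.choose (r - 1) := mod_cast H.card_edges_le_induce_sdiff_add U
  have hnC := mul_choose_le_two_mul_sub_mul_choose_sub hr hn hw hw' hUn hUw
  rw [avgDeg, verts_induce_of_subset sdiff_subset, card_sdiff_of_subset hU, dN]
  set n := H.verts.card
  set n' := n - U.card
  have hn' : (0 : ℝ) < n' := by
    have : (0 : ℝ) < n * n.choose (r - 1) :=
      mod_cast mul_pos (by omega) (Nat.choose_pos (by omega))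
    exact pos_of_mul_pos_left (by linarith : (0 : ℝ) < n' * n'.choose (r - 1)) (Nat.cast_nonneg _)
  have hrC : (r * n.choose r : ℝ) ≤ n * n.choose (r - 1) :=
    mod_cast mul_choose_le_mul_choose_pred (by omega) (by omega)
  have hex : (exN r n' F : ℝ) ≤ (p + η) * n.choose r :=
    exN_le_add_mul_choose hπp hp hη (Nat.sub_le _ _) hF
  rw [sub_le_iff_le_add, div_add' _ _ _ hn'.ne', div_le_div_iff_of_pos_right hn']
  have hr0 : (0 : ℝ) ≤ r := Nat.cast_nonneg r
  have hC0 : (0 : ℝ) ≤ n.choose (r - 1) := Nat.cast_nonneg _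
  linarith [mul_le_mul_of_nonneg_left hex hr0, mul_le_mul_of_nonneg_left hE hr0,
    mul_le_mul_of_nonneg_left hsub hr0, mul_le_mul_of_nonneg_left hrC hη,
    mul_le_mul_of_nonneg_right hUc hC0,
    mul_le_mul_of_nonneg_left hnC (by linarith : 0 ≤ c),
    mul_le_mul_of_nonneg_right hηc (by positivity : (0 : ℝ) ≤ n * n.choose (r - 1))]

theorem IsTameAt.dN_add_le (hr : 1 ≤ r) (hn : 1 ≤ n) (hm : 1 ≤ m) (hπ : 0 ≤ π) (hπp : π ≤ p)
    (hη₀ : 0 ≤ η) (hη : η ≤ w) (hwp : 16 * m * w = 1 - p) (hF : IsTameAt r n F m π c η) :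
    dN r n F + (1 - π) / (4 * m) * n.choose (r - 1) ≤ (p + 5 * w) * n.choose (r - 1) := by
  have hm' : (1 : ℝ) ≤ m := mod_cast hm
  have hd := (abs_le.1 (abs_dN_sub_le hr hn hF.density)).2
  have hC : ((n - 1).choose (r - 1) : ℝ) ≤ n.choose (r - 1) :=
    mod_cast Nat.choose_le_choose _ (Nat.sub_le n 1)
  have hcoef : π + (1 - π) / (4 * m) ≤ p + 4 * w := by
    have hw : 4 * w = (1 - p) / (4 * m) := by
      rw [← hwp]
      field_simp
      ring
    have hsub : (p - π) / (4 * m) ≤ p - π := div_le_self (sub_nonneg.2 hπp) (by linarith)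
    rw [hw]
    have := sub_div (1 - π) (1 - p) (4 * m : ℝ)
    rw [sub_sub_sub_cancel_left] at this
    linarith
  calc dN r n F + (1 - π) / (4 * m) * n.choose (r - 1)
      ≤ (π + η) * (n - 1).choose (r - 1) + (1 - π) / (4 * m) * n.choose (r - 1) := by linarith
    _ ≤ (π + η) * n.choose (r - 1) + (1 - π) / (4 * m) * n.choose (r - 1) := by gcongr
    _ = (π + (1 - π) / (4 * m) + η) * n.choose (r - 1) := by ring
    _ ≤ (p + 4 * w + w) * n.choose (r - 1) := by gcongr
    _ = (p + 5 * w) * n.choose (r - 1) := by ring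

theorem IsTameAt.isCopyIn_induce_sdiff (hr : 2 ≤ r) (hn : 2 * r ≤ H.verts.card) (hm : 1 ≤ m)
    (hπ : 0 ≤ π) (hπp : π ≤ p) (hw : 0 < w) (hwp : 16 * m * w = 1 - p) (hη₀ : 0 ≤ η) (hη : η ≤ w)
    (hηc : 8 * η ≤ c) {U : Finset ℕ} (hU : U ⊆ H.verts)
    (hUw : 2 * r * U.card ≤ w * H.verts.card) (hUc : 4 * r * U.card ≤ c * H.verts.card)
    (hF : IsTameAt r (H.verts.card - U.card) F m π c η)
    (hE : (p - η) * H.verts.card.choose r ≤ H.edges.card) {v : ℕ} (hv : v ∈ H.verts \ U)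
    (hdeg : (p + 8 * w) * H.verts.card.choose (r - 1) ≤ H.deg v) :
    F.IsCopyIn (H.induce (H.verts \ U)) := by
  have hm' : (1 : ℝ) ≤ m := mod_cast hm
  have hw' : w ≤ 1 / 4 := by nlinarith
  have hcard : (H.induce (H.verts \ U)).verts.card = H.verts.card - U.card := by
    rw [verts_induce_of_subset sdiff_subset, card_sdiff_of_subset hU]
  have hbounded := hF.bounded
  rw [← hcard] at hbounded
  refine hbounded.isCopyIn ?_ (v := v) ?_ ?_
  · rw [hcard]
    exact dN_sub_le_avgDeg_induce_sdiff hr hn hπp (hπ.trans hπp) hw.le hw' hη₀ hηc hU hUw hUc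
      hF.density hE
  · rwa [verts_induce_of_subset sdiff_subset]
  · have hdrop := mul_choose_sub_two_le hr hn hw.le hUw
    have hdegU : (H.deg v : ℝ) ≤ (H.induce (H.verts \ U)).deg v +
        U.card * H.verts.card.choose (r - 2) :=
      mod_cast deg_le_deg_induce_sdiff_add (Finset.mem_sdiff.1 hv).2
    have hC : (0 : ℝ) < H.verts.card.choose (r - 1) := mod_cast Nat.choose_pos (by omega)
    have hC' : (p + 5 * w) * (H.verts.card - U.card).choose (r - 1) ≤
        (p + 5 * w) * H.verts.card.choose (r - 1) := by
      gcongr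
      · linarith
      · exact Nat.sub_le _ _
    have hUn : 1 ≤ H.verts.card - U.card := by
      rw [← card_sdiff_of_subset hU]
      exact card_pos.2 ⟨v, hv⟩
    rw [hcard]
    linarith [hF.dN_add_le (by omega) hUn hm hπ hπp hη₀ hη hwp, mul_pos hw hC]

end Tame

section UpperBound

open Finset HGraph

variable {r m k t n u : ℕ} {F : Fin k → HGraph r} {ts : Fin k → ℕ} {π : Fin k → ℝ} {i₀ : Fin k}
  {c η w : ℝ} {H : HGraph r}

theorem le_of_two_mul_mul_le (hr : 1 ≤ r) (hw : w ≤ 1) (h : 2 * r * u ≤ w * n) : 2 * u ≤ n := by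
  have hr' : (1 : ℝ) ≤ r := mod_cast hr
  have hwn : w * n ≤ n := mul_le_of_le_one_left n.cast_nonneg hw
  have hru : (u : ℝ) ≤ r * u := le_mul_of_one_le_left u.cast_nonneg hr'
  have : (2 * u : ℝ) ≤ n := by linarith
  exact mod_cast this

theorem sub_mul_choose_le_of_lt {p : ℝ} {a e : ℕ} (hp : p - η ≤ 1)
    (ha : |(a : ℝ) - p * (n - t).choose r| ≤ η * (n - t).choose r)
    (he : n.choose r - (n - t).choose r + a < e) : (p - η) * n.choose r ≤ e := by
  have hle : (n - t).choose r ≤ n.choose r := Nat.choose_le_choose r (Nat.sub_le n t)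
  have he' : (n.choose r - (n - t).choose r + a : ℝ) ≤ e := by
    rw [← Nat.cast_sub hle]
    exact mod_cast he.le
  have hle' : ((n - t).choose r : ℝ) ≤ n.choose r := mod_cast hle
  linarith [(abs_le.1 ha).1, mul_le_mul_of_nonneg_right hp (sub_nonneg.2 hle')]

theorem add_mul_add_exN_le_sup (hr : 2 ≤ r) (hn : 2 * r ≤ n) (hm : 2 ≤ m)
    (hπ : 0 ≤ π i₀) (hw : 0 ≤ w) (hwπ : 16 * m * w = 1 - π i₀) (hη : η ≤ w)
    (hun : u ≤ n) (hu : 2 * r * u ≤ w * n) {l s b : ℕ} (hs : l + s + 1 ≤ u) (hb : l + b + 1 ≤ u)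
    (hbs : b ≤ m * s) (htame : ∀ z, n ≤ z + u → ∀ i, IsTameAt r z (F i) m (π i) c η)
    (hdom : ∀ z, n ≤ z + u → ∀ i, ∃ j, π j = π i₀ ∧ exN r z (F i) ≤ exN r z (F j)) (q : Fin k) :
    ((n.choose r - (n - l).choose r : ℕ) : ℝ) + b * ((π i₀ + 8 * w) * n.choose (r - 1)) +
        exN r (n - l - b) (F q) ≤
      (n.choose r - (n - (l + s)).choose r +
        univ.sup (fun i ↦ exN r (n - (l + s)) (F i)) : ℕ) := by
  obtain ⟨j, hj, hqj⟩ := hdom (n - l - b) (by omega) q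
  have hswap := mul_add_exN_le hr hn hm (hj ▸ hπ) hw (hj ▸ hwπ) hη hun hu hs hb hbs
    fun z hz ↦ htame z hz j
  have hqj' : (exN r (n - l - b) (F q) : ℝ) ≤ exN r (n - l - b) (F j) := mod_cast hqj
  have hsup : (exN r (n - (l + s)) (F j) : ℝ) ≤
      (univ.sup fun i ↦ exN r (n - (l + s)) (F i) : ℕ) :=
    mod_cast le_sup (f := fun i ↦ exN r (n - (l + s)) (F i)) (mem_univ j)
  rw [hj, Nat.sub_sub n l s] at hswap
  rw [Nat.cast_add, Nat.cast_sub (Nat.choose_le_choose r (Nat.sub_le n l)),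
    Nat.cast_sub (Nat.choose_le_choose r (Nat.sub_le n (l + s)))]
  linarith

theorem hasMixedMatching_of_lt_card_edges (hr : 2 ≤ r) (hn : 2 * r ≤ H.verts.card) (hm : 2 ≤ m)
    (hFv : ∀ i, (F i).verts.card ≤ m) (hπ : ∀ i, 0 ≤ π i) (hmax : ∀ i, π i ≤ π i₀)
    (hw : 0 < w) (hwπ : 16 * m * w = 1 - π i₀) (hη₀ : 0 ≤ η) (hη : η ≤ w) (hηc : 8 * η ≤ c)
    (hts : ∑ i, ts i = t + 1) (hmt : 2 * m * (t + 1) ≤ u)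
    (huw : 2 * r * u ≤ w * H.verts.card) (huc : 4 * r * u ≤ c * H.verts.card)
    (htame : ∀ z, H.verts.card ≤ z + u → ∀ i, IsTameAt r z (F i) m (π i) c η)
    (hdom : ∀ z, H.verts.card ≤ z + u → ∀ i, ∃ j, π j = π i₀ ∧ exN r z (F i) ≤ exN r z (F j))
    (hE : H.verts.card.choose r - (H.verts.card - t).choose r +
      univ.sup (fun i ↦ exN r (H.verts.card - t) (F i)) < H.edges.card) :
    HasMixedMatching r k F ts H := by
  have hm' : (2 : ℝ) ≤ m := mod_cast hm
  have hw1 : w ≤ 1 := by nlinarith [hπ i₀]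
  have hπ1 : π i₀ ≤ 1 := by nlinarith
  have hun := le_of_two_mul_mul_le (by omega) hw1 huw
  have hmtu : t + m * (t + 1) ≤ u := by nlinarith
  have htu : 2 * (t + 1) ≤ u := by nlinarith
  have hE' : (π i₀ - η) * H.verts.card.choose r ≤ H.edges.card :=
    sub_mul_choose_le_of_lt (by linarith) (htame _ (by omega) i₀).density
      (hE.trans_le' (Nat.add_le_add_left (le_sup (f := fun i ↦ exN r _ (F i)) (mem_univ i₀)) _))
  have hcopy : ∀ v ∈ H.verts, (π i₀ + 8 * w) * H.verts.card.choose (r - 1) ≤ H.deg v →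
      ∀ U ⊆ H.verts, v ∉ U → U.card ≤ t + m * (t + 1) →
      ∀ q : Σ i : Fin k, Fin (ts i), (F q.1).IsCopyIn (H.induce (H.verts \ U)) := by
    intro v hv hdeg U hU hvU hUcard q
    have hUu : (U.card : ℝ) ≤ u := mod_cast hUcard.trans hmtu
    exact (htame _ (by omega) q.1).isCopyIn_induce_sdiff hr hn (by omega) (hπ _) (hmax _) hw hwπ
      hη₀ hη hηc hU (huw.trans' (by gcongr)) (huc.trans' (by gcongr)) hE'
      (Finset.mem_sdiff.2 ⟨hv, hvU⟩) hdeg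
  obtain ⟨S, hS⟩ | ⟨l, s, b, q, rfl, hbs, hle⟩ := exists_isPacking_univ_or_card_edges_le
    (G := fun p : Σ i : Fin k, Fin (ts i) ↦ F p.1) (fun p ↦ hFv p.1) (by simpa using hts) hcopy
  · exact hS.hasMixedMatching
  · have hbu : l + b + 1 ≤ u := by nlinarith
    have hmain := add_mul_add_exN_le_sup hr hn hm (hπ i₀) hw.le hwπ hη (by omega) huw (by omega)
      hbu hbs htame hdom q.1
    exact absurd hE (not_lt.2 (mod_cast hle.trans hmain))

theorem exMixedN_le {M : ℕ} (h : ∀ H : HGraph r, H.verts.card = n → M < H.edges.card →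
    HasMixedMatching r k F ts H) : exMixedN r k F ts n ≤ M := by
  refine csSup_le' ?_
  rintro _ ⟨H, hHn, hH, rfl⟩
  exact not_lt.1 (mt (h H hHn) hH)

theorem eventually_isTameAt {F : HGraph r} {x : ℝ} (hF : HasTuranDensity r F x) (hη : 0 < η)
    (hcond : ∀ᶠ n : ℕ in atTop,
      BoundedAt r n F (c * n.choose (r - 1)) ((1 - x) / (4 * m) * n.choose (r - 1)) ∧
        SmoothAt r n F ((1 - x) / (8 * m) * n.choose (r - 1))) :
    ∀ᶠ n : ℕ in atTop, IsTameAt r n F m x c η := by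
  filter_upwards [hF.eventually_abs_sub_le hη, hcond] with n hdensity h
  exact ⟨hdensity, h.1, h.2⟩

theorem eventually_exMixedN_le (hr : 2 ≤ r) (hm : 2 ≤ m) (hFv : ∀ i, (F i).verts.card ≤ m)
    (hπ : ∀ i, HasTuranDensity r (F i) (π i)) (hmax : ∀ i, π i ≤ π i₀) (hc : 0 < c)
    (hcond : ∀ i, ∀ᶠ n : ℕ in atTop,
      BoundedAt r n (F i) (c * n.choose (r - 1)) ((1 - π i) / (4 * m) * n.choose (r - 1)) ∧
        SmoothAt r n (F i) ((1 - π i) / (8 * m) * n.choose (r - 1))) :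
    ∀ᶠ n : ℕ in atTop, ∀ t : ℕ, ∀ ts : Fin k → ℕ, ∑ i, ts i = t + 1 →
      64 * r * m ^ 2 * (t + 1 : ℝ) ≤ (1 - π i₀) * n → 8 * r * m * (t + 1 : ℝ) ≤ c * n →
      exMixedN r k F ts n ≤
        n.choose r - (n - t).choose r + univ.sup (fun i ↦ exN r (n - t) (F i)) := by
  have hm' : (2 : ℝ) ≤ m := mod_cast hm
  obtain ⟨w, hwπ⟩ : ∃ w : ℝ, 16 * m * w = 1 - π i₀ :=
    ⟨(1 - π i₀) / (16 * m), mul_div_cancel₀ _ (by positivity)⟩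
  simp only [← hwπ]
  rcases le_or_gt w 0 with hw | hw
  · refine Eventually.of_forall fun n t ts _ hscale ↦ absurd hscale (not_le.2 ?_)
    have : 16 * m * w * n ≤ 0 :=
      mul_nonpos_of_nonpos_of_nonneg (mul_nonpos_of_nonneg_of_nonpos (by positivity) hw)
        n.cast_nonneg
    exact this.trans_lt (by positivity)
  have hw1 : w ≤ 1 := by nlinarith [(hπ i₀).nonneg]
  have hη : 0 < min (c / 8) w := lt_min (by positivity) hw
  obtain ⟨N, hN⟩ := eventually_atTop.1 ((eventually_all.2 fun i ↦
    eventually_isTameAt (m := m) (hπ i) hη (hcond i)).and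
      (eventually_exists_exN_le_of_maximal_density hπ hmax))
  filter_upwards [eventually_ge_atTop (2 * N), eventually_ge_atTop (2 * r)] with
    n hNn hrn t ts hts hscale hscale'
  have huw : 2 * r * (2 * m * (t + 1) : ℕ) ≤ w * n := by
    refine le_of_mul_le_mul_left ?_ (by positivity : (0 : ℝ) < 16 * m)
    push_cast
    linarith
  have huc : 4 * r * (2 * m * (t + 1) : ℕ) ≤ c * n := by
    push_cast
    linarith
  have hun := le_of_two_mul_mul_le (by omega) hw1 huw
  refine exMixedN_le ?_
  rintro H rfl hE
  exact hasMixedMatching_of_lt_card_edges hr hrn hm hFv (fun i ↦ (hπ i).nonneg) hmax hw hwπ hη.le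
    (min_le_right _ _) (by linarith [min_le_left (c / 8) w]) hts le_rfl huw huc
    (fun z hz ↦ (hN z (by omega)).1) (fun z hz ↦ (hN z (by omega)).2) hE

theorem mul_le_of_le_min_iInf_mul (hr : 1 ≤ r) (hm : 1 ≤ m) {x y : ℝ} (hx : 0 ≤ x) (hy : 0 ≤ y)
    (h : x ≤ min (c / (4 * Real.exp 1 * r * m)) (⨅ i, (1 - π i) / (64 * r * m ^ 2)) * y)
    (i : Fin k) : 64 * r * m ^ 2 * x ≤ (1 - π i) * y ∧ 8 * r * m * x ≤ c * y := by
  have : (0 : ℝ) < r := mod_cast hr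
  have : (0 : ℝ) < m := mod_cast hm
  constructor
  · have hπ : x ≤ (1 - π i) / (64 * r * m ^ 2) * y :=
      h.trans (by gcongr; exact min_le_of_right_le (ciInf_le (Set.finite_range _).bddBelow i))
    rwa [div_mul_eq_mul_div, le_div_iff₀' (by positivity)] at hπ
  · have hc : x ≤ c / (4 * Real.exp 1 * r * m) * y := h.trans (by gcongr; exact min_le_left _ _)
    rw [div_mul_eq_mul_div, le_div_iff₀' (by positivity)] at hc
    refine hc.trans' ?_
    have he : 2 ≤ Real.exp 1 := by linarith [Real.add_one_le_exp 1]
    calc 8 * r * m * x = 4 * 2 * r * m * x := by ring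
      _ ≤ 4 * Real.exp 1 * r * m * x := by gcongr

theorem le_of_mul_le_one_sub_mul {a p x y : ℝ} (ha : 1 ≤ a) (hx : 0 ≤ x) (hp : 0 ≤ p) (hy : 0 ≤ y)
    (h : a * x ≤ (1 - p) * y) : x ≤ y := by
  calc x ≤ a * x := le_mul_of_one_le_left hx ha
    _ ≤ (1 - p) * y := h
    _ ≤ y := mul_le_of_le_one_left hy (by linarith)

end UpperBound

theorem statement_18_general (m r k : ℕ) (hr : 2 ≤ r) (hk : 1 ≤ k)
    (F : Fin k → HGraph r) (hFv : ∀ i, (F i).verts.card ≤ m)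
    (π : Fin k → ℝ)
    (hπ : ∀ i, HasTuranDensity r (F i) (π i)) (hF : ∀ i, (F i).edges.Nonempty)
    (c : ℝ) (hc : 0 < c)
    (hcond : ∀ i, ∀ᶠ n : ℕ in atTop,
      BoundedAt r n (F i) (c * (n.choose (r - 1) : ℝ))
        ((1 - π i) / (4 * m) * (n.choose (r - 1) : ℝ)) ∧
      SmoothAt r n (F i) ((1 - π i) / (8 * m) * (n.choose (r - 1) : ℝ))) :
    ∃ N₀ : ℕ, ∀ n : ℕ, N₀ ≤ n → ∀ t : ℕ, ∀ ts : Fin k → ℕ,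
      (∑ i, ts i) = t + 1 →
      ((t : ℝ) + 1) ≤
        min (c / (4 * Real.exp 1 * r * m)) (⨅ i, (1 - π i) / (64 * r * m ^ 2)) * n →
      exMixedN r k F ts n ≤
        n.choose r - (n - t).choose r + Finset.univ.sup (fun i ↦ exN r (n - t) (F i)) ∧
      (Finset.univ.sup (fun i ↦ exN r (n - t) (F i)) = exFamN r k F (n - t) →
        exMixedN r k F ts n =
          n.choose r - (n - t).choose r + Finset.univ.sup (fun i ↦ exN r (n - t) (F i))) := by
  have : Nonempty (Fin k) := ⟨⟨0, hk⟩⟩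
  obtain ⟨i₀, hmax⟩ := Finite.exists_max π
  have hm : 2 ≤ m := hr.trans (((F i₀).le_card_verts_of_edges_nonempty (hF i₀)).trans (hFv i₀))
  obtain ⟨N, hN⟩ := eventually_atTop.1 (eventually_exMixedN_le hr hm hFv hπ hmax hc hcond)
  refine ⟨N, fun n hn t ts hts hscale ↦ ?_⟩
  obtain ⟨hscaleπ, hscalec⟩ :=
    mul_le_of_le_min_iInf_mul (by omega) (by omega) (by positivity) n.cast_nonneg hscale i₀
  have hle := hN n hn t ts hts hscaleπ hscalec
  have htn : t + 1 ≤ n := mod_cast le_of_mul_le_one_sub_mul (by norm_cast; nlinarith)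
    (by positivity) (hπ i₀).nonneg n.cast_nonneg hscaleπ
  refine ⟨hle, fun heq ↦ hle.antisymm ?_⟩
  rw [heq]
  exact choose_sub_choose_add_exFamN_le_exMixedN (by omega) hF (hts ▸ t.lt_succ_self) (by omega)

/-- the extension of the main theorem to vertex-disjoint unions of
different hypergraphs. -/
theorem statement_18 (m r k : ℕ) (hr : 2 ≤ r) (hrm : r ≤ m) (hk : 1 ≤ k)
    (F : Fin k → HGraph r) (hFv : ∀ i, (F i).verts.card ≤ m)
    (π : Fin k → ℝ)
    (hπ : ∀ i, HasTuranDensity r (F i) (π i)) (hπ0 : ∀ i, 0 < π i)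
    (c : ℝ) (hc : 0 < c)
    (hcond : ∀ i, ∀ᶠ n : ℕ in atTop,
      BoundedAt r n (F i) (c * (n.choose (r-1) : ℝ))
        ((1 - π i) / (4 * m) * (n.choose (r-1) : ℝ)) ∧
      SmoothAt r n (F i) ((1 - π i) / (8 * m) * (n.choose (r-1) : ℝ))) :
    ∃ N₀ : ℕ, ∀ n : ℕ, N₀ ≤ n → ∀ t : ℕ, ∀ ts : Fin k → ℕ,
      (∑ i, ts i) = t + 1 →
      ((t : ℝ) + 1) ≤
        min (c / (4 * Real.exp 1 * r * m)) (⨅ i, (1 - π i) / (64 * r * m ^ 2)) * n →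
      exMixedN r k F ts n ≤
        n.choose r - (n - t).choose r + Finset.univ.sup (fun i => exN r (n - t) (F i)) ∧
      (Finset.univ.sup (fun i => exN r (n - t) (F i)) = exFamN r k F (n - t) →
        exMixedN r k F ts n =
          n.choose r - (n - t).choose r + Finset.univ.sup (fun i => exN r (n - t) (F i))) :=
  statement_18_general m r k hr hk F hFv π hπ (fun i ↦ (hπ i).edges_nonempty (hπ0 i)) c hc hcond

end DensityCH
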